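/- Let L(x) = x/arsinh(x) for real x ≠ 0. Then for every real x ≠ 0, L(x)⁵ = (x⁴(1+x²)²/4!)·L⁽⁴⁾(x) + (x³(x²−2)(1+x²)/12)·L'''(x) + (x²(x⁴+10x²+12)/4!)·L''(x) − (x(x⁴+20x²+24)/4!)·L'(x) + ((x⁴+20x²+24)/4!)·L(x). -/

import Mathlib

/-- `L x = x / arsinh x`. -/
noncomputable def Lfun : ℝ → ℝ := fun x => x / Real.arsinh x

/-!
In the coordinate `t = arsinh x` the function `L x / x` is `1 / t`, whose fourth derivative is
`24 / t ^ 5 = 24 * (L x / x) ^ 5`. The second derivative in `t` is the differential operator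
`f ↦ (1 + x ^ 2) * f'' + x * f'` in `x`, so the identity is the square of this operator applied to
`f = L x / x`, rewritten in terms of `L` by the Leibniz rule for `L = x * f`.
-/

open Real Filter Topology
open scoped Nat

section IteratedDeriv

variable {𝕜 F : Type*} [NontriviallyNormedField 𝕜] [NormedAddCommGroup F] [NormedSpace 𝕜 F]

theorem contDiffAt_iteratedDeriv {f : 𝕜 → F} {x : 𝕜} {m p : WithTop ℕ∞} {n : ℕ}
    (hf : ContDiffAt 𝕜 p f x) (hmn : m + n ≤ p) : ContDiffAt 𝕜 m (iteratedDeriv n f) x := by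
  induction n generalizing m with
  | zero =>
    rw [iteratedDeriv_zero]
    exact hf.of_le (by simpa only [Nat.cast_zero, add_zero] using hmn)
  | succ n ih =>
    rw [iteratedDeriv_succ]
    refine (ih (m := m + 1) ?_).derivWithin le_rfl
    rwa [add_assoc, add_comm 1, ← Nat.cast_succ]

theorem hasDerivAt_iteratedDeriv {f : 𝕜 → F} {x : 𝕜} {p : WithTop ℕ∞} {n : ℕ}
    (hf : ContDiffAt 𝕜 p f x) (hn : n + 1 ≤ p) :
    HasDerivAt (iteratedDeriv n f) (iteratedDeriv (n + 1) f x) x := by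
  rw [iteratedDeriv_succ]
  exact ((contDiffAt_iteratedDeriv hf (add_comm (n : WithTop ℕ∞) 1 ▸ hn)).differentiableAt
    one_ne_zero).hasDerivAt

theorem iteratedDeriv_succ_id_mul {f : 𝕜 → 𝕜} {x : 𝕜} {n : ℕ}
    (hf : ContDiffAt 𝕜 (n + 1 : ℕ) f x) :
    iteratedDeriv (n + 1) (fun y ↦ y * f y) x =
      x * iteratedDeriv (n + 1) f x + (n + 1) * iteratedDeriv n f x := by
  rw [iteratedDeriv_fun_mul contDiffAt_fun_id hf, Finset.sum_range_succ', Finset.sum_range_succ']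
  simp [iteratedDeriv_fun_id, add_comm]

end IteratedDeriv

/-- The second derivative `(√(1 + x ^ 2) * d/dx) ^ 2` in the coordinate `t = arsinh x`, written out
in `x` so that the square root disappears. -/
noncomputable def arsinhLaplacian (f : ℝ → ℝ) (x : ℝ) : ℝ :=
  (1 + x ^ 2) * iteratedDeriv 2 f x + x * deriv f x

section ArsinhLaplacian

variable {f : ℝ → ℝ} {x : ℝ}

theorem contDiffAt_arsinhLaplacian {m p : WithTop ℕ∞} (hf : ContDiffAt ℝ p f x) (hm : m + 2 ≤ p) :
    ContDiffAt ℝ m (arsinhLaplacian f) x := by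
  have hf₁ : ContDiffAt ℝ m (deriv f) x :=
    hf.derivWithin ((add_le_add_right one_le_two m).trans hm)
  have hf₂ : ContDiffAt ℝ m (iteratedDeriv 2 f) x := contDiffAt_iteratedDeriv hf hm
  unfold arsinhLaplacian
  fun_prop

theorem iteratedDeriv_two_comp_sinh {t : ℝ} (hf : ContDiffAt ℝ 2 f (sinh t)) :
    iteratedDeriv 2 (f ∘ sinh) t = arsinhLaplacian f (sinh t) := by
  have hderiv : deriv (f ∘ sinh) =ᶠ[𝓝 t] fun s ↦ deriv f (sinh s) * cosh s := by
    filter_upwards [continuous_sinh.continuousAt.eventually (hf.eventually (by simp))] with s hs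
    exact ((hs.differentiableAt two_ne_zero).hasDerivAt.comp s (hasDerivAt_sinh s)).deriv
  have hf₁ : HasDerivAt (deriv f) (iteratedDeriv 2 f (sinh t)) (sinh t) := by
    simpa only [iteratedDeriv_one] using hasDerivAt_iteratedDeriv (n := 1) hf (by norm_num)
  have hderiv₂ := (hf₁.comp t (hasDerivAt_sinh t)).mul (hasDerivAt_cosh t)
  rw [iteratedDeriv_succ, iteratedDeriv_one, hderiv.deriv_eq]
  refine hderiv₂.deriv.trans ?_
  simp only [Function.comp_apply, arsinhLaplacian]
  linear_combination iteratedDeriv 2 f (sinh t) * cosh_sq t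

theorem iteratedDeriv_two_mul_comp_sinh {k : ℕ} {t : ℝ}
    (hf : ContDiffAt ℝ (2 * k : ℕ) f (sinh t)) :
    iteratedDeriv (2 * k) (f ∘ sinh) t = arsinhLaplacian^[k] f (sinh t) := by
  induction k generalizing f with
  | zero => simp
  | succ k ih =>
    have hcomp : iteratedDeriv 2 (f ∘ sinh) =ᶠ[𝓝 t] arsinhLaplacian f ∘ sinh := by
      filter_upwards [continuous_sinh.continuousAt.eventually
        (hf.eventually (ENat.natCast_ne_coe_top _))] with s hs
      exact iteratedDeriv_two_comp_sinh (hs.of_le (by norm_cast; lia))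
    calc iteratedDeriv (2 * (k + 1)) (f ∘ sinh) t
        = iteratedDeriv (2 * k) (iteratedDeriv 2 (f ∘ sinh)) t := by
          simp only [iteratedDeriv_eq_iterate, ← Function.iterate_add_apply, mul_add, mul_one]
      _ = iteratedDeriv (2 * k) (arsinhLaplacian f ∘ sinh) t := hcomp.iteratedDeriv_eq _
      _ = arsinhLaplacian^[k + 1] f (sinh t) :=
          ih (contDiffAt_arsinhLaplacian hf (by norm_cast))

theorem contDiffAt_inv_arsinh {n : WithTop ℕ∞} (hx : x ≠ 0) :
    ContDiffAt ℝ n (fun y ↦ (arsinh y)⁻¹) x :=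
  contDiff_arsinh.contDiffAt.inv (arsinh_eq_zero_iff.not.mpr hx)

theorem iterate_arsinhLaplacian_inv_arsinh (k : ℕ) (hx : x ≠ 0) :
    arsinhLaplacian^[k] (fun y ↦ (arsinh y)⁻¹) x = (2 * k)! * (arsinh x)⁻¹ ^ (2 * k + 1) := by
  have hcomp : (fun y ↦ (arsinh y)⁻¹) ∘ sinh = Inv.inv := by
    ext t
    simp only [Function.comp_apply, arsinh_sinh]
  have hexp : (-1 - (2 * k : ℕ) : ℤ) = -((2 * k + 1 : ℕ) : ℤ) := by push_cast; ring
  calc arsinhLaplacian^[k] (fun y ↦ (arsinh y)⁻¹) x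
      = iteratedDeriv (2 * k) ((fun y ↦ (arsinh y)⁻¹) ∘ sinh) (arsinh x) := by
        rw [iteratedDeriv_two_mul_comp_sinh, sinh_arsinh]
        exact contDiffAt_inv_arsinh (by rwa [sinh_arsinh])
    _ = (-1) ^ (2 * k) * (2 * k)! * arsinh x ^ (-1 - (2 * k : ℕ) : ℤ) := by
        rw [hcomp, iteratedDeriv_eq_iterate, iter_deriv_inv]
    _ = (2 * k)! * (arsinh x)⁻¹ ^ (2 * k + 1) := by
        rw [hexp, zpow_neg, zpow_natCast, inv_pow, (even_two_mul k).neg_one_pow, one_mul]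

theorem deriv_arsinhLaplacian (hf : ContDiffAt ℝ 3 f x) :
    deriv (arsinhLaplacian f) x =
      (1 + x ^ 2) * iteratedDeriv 3 f x + 3 * x * iteratedDeriv 2 f x + deriv f x := by
  have hf₁ : HasDerivAt (deriv f) (iteratedDeriv 2 f x) x := by
    simpa only [iteratedDeriv_one] using hasDerivAt_iteratedDeriv (n := 1) hf (by norm_num)
  have hf₂ := hasDerivAt_iteratedDeriv (n := 2) hf (by norm_num)
  have h := (((hasDerivAt_pow 2 x).const_add 1).mul hf₂).add ((hasDerivAt_id' x).mul hf₁)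
  refine h.deriv.trans ?_
  push_cast
  ring

theorem iteratedDeriv_two_arsinhLaplacian (hf : ContDiffAt ℝ 4 f x) :
    iteratedDeriv 2 (arsinhLaplacian f) x =
      (1 + x ^ 2) * iteratedDeriv 4 f x + 5 * x * iteratedDeriv 3 f x
        + 4 * iteratedDeriv 2 f x := by
  have hderiv : deriv (arsinhLaplacian f) =ᶠ[𝓝 x] fun y ↦
      (1 + y ^ 2) * iteratedDeriv 3 f y + 3 * y * iteratedDeriv 2 f y + deriv f y := by
    filter_upwards [hf.eventually (by simp)] with y hy
    exact deriv_arsinhLaplacian (hy.of_le (by norm_num))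
  have hf₁ : HasDerivAt (deriv f) (iteratedDeriv 2 f x) x := by
    simpa only [iteratedDeriv_one] using hasDerivAt_iteratedDeriv (n := 1) hf (by norm_num)
  have hf₂ := hasDerivAt_iteratedDeriv (n := 2) hf (by norm_num)
  have hf₃ := hasDerivAt_iteratedDeriv (n := 3) hf (by norm_num)
  have h := ((((hasDerivAt_pow 2 x).const_add 1).mul hf₃).add
    (((hasDerivAt_id' x).const_mul 3).mul hf₂)).add hf₁
  rw [iteratedDeriv_succ, iteratedDeriv_one, hderiv.deriv_eq]
  refine h.deriv.trans ?_
  push_cast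
  ring

theorem arsinhLaplacian_arsinhLaplacian (hf : ContDiffAt ℝ 4 f x) :
    arsinhLaplacian (arsinhLaplacian f) x =
      (1 + x ^ 2) ^ 2 * iteratedDeriv 4 f x + 6 * x * (1 + x ^ 2) * iteratedDeriv 3 f x
        + (7 * x ^ 2 + 4) * iteratedDeriv 2 f x + x * deriv f x := by
  rw [arsinhLaplacian, iteratedDeriv_two_arsinhLaplacian hf,
    deriv_arsinhLaplacian (hf.of_le (by norm_num))]
  ring

end ArsinhLaplacian

theorem statement15 (x : ℝ) (hx : x ≠ 0) :
    Lfun x ^ 5 = x ^ 4 * (1 + x ^ 2) ^ 2 / 24 * iteratedDeriv 4 Lfun x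
      + x ^ 3 * (x ^ 2 - 2) * (1 + x ^ 2) / 12 * iteratedDeriv 3 Lfun x
      + x ^ 2 * (x ^ 4 + 10 * x ^ 2 + 12) / 24 * iteratedDeriv 2 Lfun x
      - x * (x ^ 4 + 20 * x ^ 2 + 24) / 24 * deriv Lfun x
      + (x ^ 4 + 20 * x ^ 2 + 24) / 24 * Lfun x := by
  set f : ℝ → ℝ := fun y ↦ (arsinh y)⁻¹
  have hL : Lfun = fun y ↦ y * f y := funext fun y ↦ div_eq_mul_inv y (arsinh y)
  have leibniz (n : ℕ) : iteratedDeriv (n + 1) Lfun x =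
      x * iteratedDeriv (n + 1) f x + (n + 1) * iteratedDeriv n f x :=
    hL ▸ iteratedDeriv_succ_id_mul (contDiffAt_inv_arsinh hx)
  have fourth_deriv : arsinhLaplacian (arsinhLaplacian f) x = 24 * f x ^ 5 :=
    iterate_arsinhLaplacian_inv_arsinh 2 hx
  rw [arsinhLaplacian_arsinhLaplacian (contDiffAt_inv_arsinh hx)] at fourth_deriv
  rw [← iteratedDeriv_one, leibniz 3, leibniz 2, leibniz 1, leibniz 0, hL]
  simp only [zero_add, iteratedDeriv_one, iteratedDeriv_zero]
  push_cast
  linear_combination -x ^ 5 / 24 * fourth_deriv
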